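/- Let 0 ≤ q_w ≤ 1 and let ρ_w = q_w·|φ⁺⟩⟨φ⁺| + ((1−q_w)/4)·I be the two-qubit Werner state, where φ⁺ = (|00⟩+|11⟩)/√2, and let σ be a qubit density matrix with Bloch vector (s_x,s_y,s_z) and s := √(s_x²+s_y²) > 0. Then: (i) if s ≤ q_w·√(1−s_z²), there exist a finite POVM (M_i) on ℂ² (each M_i Hermitian with M_i ⪰ 0 and ∑_i M_i = I) and, for every i with t_i := Tr[(M_i ⊗ I)·ρ_w] > 0, a finite family (K_{i,n}) of incoherent 2×2 Kraus operators with ∑_n K_{i,n}ᴴK_{i,n} = I and ∑_n K_{i,n}·Tr_A[(M_i ⊗ I)·ρ_w]·K_{i,n}ᴴ = t_i·σ (so σ is prepared on Bob's side with unit probability); (ii) if s > q_w·√(1−s_z²), then for every finite POVM (M_i) on ℂ² and every choice of finite families (K_{i,n}) of incoherent 2×2 Kraus operators with ∑_n K_{i,n}ᴴK_{i,n} ⪯ I and ∑_n K_{i,n}·Tr_A[(M_i ⊗ I)·ρ_w]·K_{i,n}ᴴ = c_i·σ for some reals c_i ≥ 0, one has ∑_i c_i = 0 (σ cannot be prepared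 with any nonzero probability). -/

import Mathlib

open Matrix BigOperators
open scoped Kronecker Classical ComplexOrder

/-- The qubit state with Bloch vector `(rx, ry, rz)`:
`ρ = (1/2)(I + rx σx + ry σy + rz σz)`. -/
noncomputable def blochState (rx ry rz : ℝ) : Matrix (Fin 2) (Fin 2) ℂ :=
  !![(1 + rz : ℂ)/2, ((rx : ℂ) - ry * Complex.I)/2;
     ((rx : ℂ) + ry * Complex.I)/2, (1 - rz : ℂ)/2]

/-- `K` is an incoherent Kraus operator: every column has at most one nonzero entry. -/
def IsIncoherentKraus {d : ℕ} (K : Matrix (Fin d) (Fin d) ℂ) : Prop :=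
  ∀ j i i', K i j ≠ 0 → K i' j ≠ 0 → i = i'

/-- `K` is a strictly incoherent Kraus operator: every row and every column
has at most one nonzero entry. -/
def IsSIKraus {d : ℕ} (K : Matrix (Fin d) (Fin d) ℂ) : Prop :=
  (∀ i j j', K i j ≠ 0 → K i j' ≠ 0 → j = j') ∧
  (∀ j i i', K i j ≠ 0 → K i' j ≠ 0 → i = i')

/-- Partial trace over the first (A) factor. -/
noncomputable def ptraceA {dA dB : ℕ} (X : Matrix (Fin dA × Fin dB) (Fin dA × Fin dB) ℂ) :
    Matrix (Fin dB) (Fin dB) ℂ :=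
  fun j j' => ∑ i, X (i, j) (i, j')

/-- Partial trace over the second (B) factor. -/
noncomputable def ptraceB {dA dB : ℕ} (X : Matrix (Fin dA × Fin dB) (Fin dA × Fin dB) ℂ) :
    Matrix (Fin dA) (Fin dA) ℂ :=
  fun i i' => ∑ j, X (i, j) (i', j)

/-- The completely dephasing map: keep the diagonal of `X`. -/
noncomputable def dephase {d : ℕ} (X : Matrix (Fin d) (Fin d) ℂ) : Matrix (Fin d) (Fin d) ℂ :=
  Matrix.diagonal X.diag

/-- The maximally entangled two-qubit state `(|00⟩ + |11⟩)/√2`. -/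
noncomputable def phiPlus : Fin 2 × Fin 2 → ℂ :=
  fun x => if x.1 = x.2 then ((Real.sqrt 2)⁻¹ : ℝ) else 0

/-- The two-qubit Werner state `q |φ⁺⟩⟨φ⁺| + (1-q)/4 · I`. -/
noncomputable def wernerState (qw : ℝ) : Matrix (Fin 2 × Fin 2) (Fin 2 × Fin 2) ℂ :=
  (qw : ℂ) • Matrix.vecMulVec phiPlus (star phiPlus) + (((1 - qw) / 4 : ℝ) : ℂ) • 1

/-!
Measuring half of `φ⁺` with effect `M` steers Bob to `Mᵀ`, so the Werner state sends the effect with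
Bloch vector `r` to a state whose Bloch vector is `r` reflected and shrunk by `q_w`.

If `s ≤ q_w √(1 - s_z²)`, Alice measures `σ_x` with just enough noise that Bob's Bloch vectors are
`(±x, 0, 0)` with `s = x √(1 - s_z²)`. These states are invariant under the bit flip, so Bob may
apply `K` or `K σ_x` with `K` diagonal of unit Frobenius norm: together these are trace preserving
and map the state `X` to `2 K X Kᴴ`, which is `σ` for the right `K`.

For the converse, consider the cone of matrices with `X ⪯ (1 + q) Δ(X)`, `Δ` being the dephasing
map. It is closed under sums and, on qubits, under incoherent Kraus operators: such an operator is
either strictly incoherent, hence commutes with `Δ`, or has a single nonzero row, hence diagonal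
outputs. All states to which Alice can steer lie in the cone with `q = q_w`, while `σ` lies in it
only if `s ≤ q_w √(1 - s_z²)`.
-/

section PartialTrace

variable {dA dB : ℕ}

lemma ptraceA_add (X Y : Matrix (Fin dA × Fin dB) (Fin dA × Fin dB) ℂ) :
    ptraceA (X + Y) = ptraceA X + ptraceA Y := by
  ext j j'
  simp [ptraceA, Finset.sum_add_distrib]

lemma ptraceA_smul (c : ℂ) (X : Matrix (Fin dA × Fin dB) (Fin dA × Fin dB) ℂ) :
    ptraceA (c • X) = c • ptraceA X := by
  ext j j'
  simp [ptraceA, Finset.mul_sum]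

lemma ptraceA_kronecker (A : Matrix (Fin dA) (Fin dA) ℂ) (B : Matrix (Fin dB) (Fin dB) ℂ) :
    ptraceA (A ⊗ₖ B) = A.trace • B := by
  ext j j'
  simp [ptraceA, Matrix.trace, Finset.sum_mul]

lemma trace_ptraceA (X : Matrix (Fin dA × Fin dB) (Fin dA × Fin dB) ℂ) :
    (ptraceA X).trace = X.trace := by
  simp only [Matrix.trace, ptraceA, Matrix.diag_apply, Fintype.sum_prod_type]
  exact Finset.sum_comm

end PartialTrace

section Dephasing

variable {d : ℕ}

lemma dephase_add (X Y : Matrix (Fin d) (Fin d) ℂ) :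
    dephase (X + Y) = dephase X + dephase Y := by
  simp [dephase]

lemma dephase_smul {R : Type*} [SMulZeroClass R ℂ] (c : R) (X : Matrix (Fin d) (Fin d) ℂ) :
    dephase (c • X) = c • dephase X := by
  simp [dephase]

lemma dephase_sum {ι : Type*} (s : Finset ι) (X : ι → Matrix (Fin d) (Fin d) ℂ) :
    dephase (∑ n ∈ s, X n) = ∑ n ∈ s, dephase (X n) :=
  map_sum (AddMonoidHom.mk' dephase dephase_add) X s

lemma dephase_one : dephase (1 : Matrix (Fin d) (Fin d) ℂ) = 1 := by
  simp [dephase]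

lemma IsSIKraus.dephase_conj {K : Matrix (Fin d) (Fin d) ℂ} (hK : IsSIKraus K)
    (X : Matrix (Fin d) (Fin d) ℂ) : dephase (K * X * Kᴴ) = K * dephase X * Kᴴ := by
  ext i i'
  simp only [dephase, diagonal_apply, diag_apply, mul_apply, conjTranspose_apply, mul_ite,
    mul_zero, Finset.sum_ite_eq', Finset.mem_univ, if_true]
  split_ifs with hii'
  · subst hii'
    refine Finset.sum_congr rfl fun j _ => ?_
    rw [Finset.sum_mul]
    refine Finset.sum_eq_single j (fun l _ hlj => ?_) (by simp)
    by_cases hl : K i l = 0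
    · simp [hl]
    · have hj : K i j = 0 := by_contra fun hj => hlj (hK.1 i l j hl hj)
      simp [hj]
  · refine (Finset.sum_eq_zero fun j _ => ?_).symm
    by_cases hi : K i j = 0
    · simp [hi]
    · have hi' : K i' j = 0 := by_contra fun hi' => hii' (hK.2 j i i' hi hi')
      simp [hi']

lemma dephase_conj_of_single_row {K : Matrix (Fin d) (Fin d) ℂ} {a : Fin d}
    (hK : ∀ i j, K i j ≠ 0 → i = a) (X : Matrix (Fin d) (Fin d) ℂ) :
    dephase (K * X * Kᴴ) = K * X * Kᴴ := by
  ext i i'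
  rw [dephase, diagonal_apply]
  split_ifs with hii'
  · rw [hii', diag_apply]
  · have hrow : ∀ i, i ≠ a → ∀ j, K i j = 0 := fun i hi j => not_not.mp (mt (hK i j) hi)
    rcases eq_or_ne i a with rfl | hi
    · simp [mul_apply, hrow i' (Ne.symm hii')]
    · simp [mul_apply, hrow i hi]

lemma IsIncoherentKraus.isSIKraus_or_single_row {K : Matrix (Fin 2) (Fin 2) ℂ}
    (hK : IsIncoherentKraus K) : IsSIKraus K ∨ ∃ a, ∀ i j, K i j ≠ 0 → i = a := by
  by_cases hrow : ∀ i j j', K i j ≠ 0 → K i j' ≠ 0 → j = j'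
  · exact .inl ⟨hrow, hK⟩
  · push Not at hrow
    obtain ⟨a, j, j', hj, hj', hjj'⟩ := hrow
    refine .inr ⟨a, fun i k hik => ?_⟩
    obtain rfl | rfl : k = j ∨ k = j' := by omega
    · exact hK k i a hik hj
    · exact hK k i a hik hj'

end Dephasing

section CoherenceBound

/-- The matrix inequality `X ⪯ (1 + q) Δ(X)`, where `Δ` is the dephasing map. For a state `X` it
says that the max-relative entropy `D_max(X ‖ Δ(X))` is at most `log (1 + q)`; for a qubit state it
is equivalent to `|X₀₁| ≤ q √(X₀₀ X₁₁)`. It serves as an obstruction to incoherent conversion. -/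
def CoherenceBounded {d : ℕ} (q : ℝ) (X : Matrix (Fin d) (Fin d) ℂ) : Prop :=
  ((1 + q) • dephase X - X).PosSemidef

variable {d : ℕ} {q : ℝ}

lemma CoherenceBounded.smul {X : Matrix (Fin d) (Fin d) ℂ} (hX : CoherenceBounded q X) {c : ℝ}
    (hc : 0 ≤ c) : CoherenceBounded q (c • X) := by
  rw [CoherenceBounded, dephase_smul, smul_comm, ← smul_sub]
  exact PosSemidef.smul hX hc

lemma CoherenceBounded.sum {ι : Type*} {s : Finset ι} {X : ι → Matrix (Fin d) (Fin d) ℂ}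
    (hX : ∀ n ∈ s, CoherenceBounded q (X n)) : CoherenceBounded q (∑ n ∈ s, X n) := by
  rw [CoherenceBounded, dephase_sum, Finset.smul_sum, ← Finset.sum_sub_distrib]
  exact posSemidef_sum s hX

lemma CoherenceBounded.conj_of_isSIKraus {X K : Matrix (Fin d) (Fin d) ℂ}
    (hX : CoherenceBounded q X) (hK : IsSIKraus K) : CoherenceBounded q (K * X * Kᴴ) := by
  have hconj : (1 + q) • dephase (K * X * Kᴴ) - K * X * Kᴴ =
      K * ((1 + q) • dephase X - X) * Kᴴ := by
    simp only [hK.dephase_conj, mul_sub, sub_mul, mul_smul_comm, smul_mul_assoc]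
  rw [CoherenceBounded, hconj]
  exact PosSemidef.mul_mul_conjTranspose_same hX K

lemma coherenceBounded_of_dephase_eq_self {X : Matrix (Fin d) (Fin d) ℂ} (hX : X.PosSemidef)
    (hdiag : dephase X = X) (hq : 0 ≤ q) : CoherenceBounded q X := by
  rw [CoherenceBounded, hdiag, add_smul, one_smul, add_sub_cancel_left]
  exact hX.smul hq

lemma CoherenceBounded.conj {X K : Matrix (Fin 2) (Fin 2) ℂ} (hX : CoherenceBounded q X)
    (hpos : X.PosSemidef) (hq : 0 ≤ q) (hK : IsIncoherentKraus K) :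
    CoherenceBounded q (K * X * Kᴴ) := by
  rcases hK.isSIKraus_or_single_row with hSI | ⟨a, hrow⟩
  · exact hX.conj_of_isSIKraus hSI
  · exact coherenceBounded_of_dephase_eq_self (hpos.mul_mul_conjTranspose_same K)
      (dephase_conj_of_single_row hrow X) hq

lemma coherenceBounded_one {X : Matrix (Fin 2) (Fin 2) ℂ} (hX : X.PosSemidef) :
    CoherenceBounded 1 X := by
  -- `2 Δ(X) - X` is the conjugate of `X` by `σ_z`.
  have hflip : ((1 : ℝ) + 1) • dephase X - X =
      diagonal ![1, -1] * X * (diagonal ![1, -1] : Matrix (Fin 2) (Fin 2) ℂ)ᴴ := by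
    ext i j
    fin_cases i <;> fin_cases j <;> simp [dephase, diagonal_conjTranspose] <;> ring
  rw [CoherenceBounded, hflip]
  exact hX.mul_mul_conjTranspose_same _

lemma posSemidef_trace_smul_one_sub {𝕜 n : Type*} [RCLike 𝕜] [Fintype n] [DecidableEq n]
    {X : Matrix n n 𝕜} (hX : X.PosSemidef) : (X.trace • 1 - X).PosSemidef := by
  set U : Matrix n n 𝕜 := hX.1.eigenvectorUnitary.1
  have hUU : U * Uᴴ = 1 := Unitary.coe_mul_star_self _
  have hspec : X.trace • 1 - X =
      U * diagonal (fun i => X.trace - (hX.1.eigenvalues i : 𝕜)) * Uᴴ := by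
    rw [← diagonal_sub, mul_sub, sub_mul, ← smul_one_eq_diagonal, mul_smul_comm, smul_mul_assoc,
      mul_one, hUU]
    congr 1
    exact hX.1.spectral_theorem
  rw [hspec]
  refine (PosSemidef.diagonal fun i => ?_).mul_mul_conjTranspose_same U
  have hle := Finset.single_le_sum (fun j _ => hX.eigenvalues_nonneg j) (Finset.mem_univ i)
  rw [Pi.zero_apply, hX.1.trace_eq_sum_eigenvalues, sub_nonneg]
  exact_mod_cast hle

end CoherenceBound

section BlochState

lemma trace_blochState (rx ry rz : ℝ) : (blochState rx ry rz).trace = 1 := by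
  rw [blochState, trace_fin_two_of]
  ring

lemma blochState_add_blochState_neg (rx ry rz : ℝ) :
    blochState rx ry rz + blochState (-rx) (-ry) (-rz) = 1 := by
  ext i j
  fin_cases i <;> fin_cases j <;> simp [blochState] <;> ring

lemma isHermitian_blochState (rx ry rz : ℝ) : (blochState rx ry rz).IsHermitian := by
  ext i j
  fin_cases i <;> fin_cases j <;> simp [blochState, sub_eq_add_neg]

lemma posSemidef_blochState {rx ry rz : ℝ} (hr : rx ^ 2 + ry ^ 2 + rz ^ 2 ≤ 1) :
    (blochState rx ry rz).PosSemidef := by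
  -- This is `(r ⬝ σ)² = |r|²` rewritten in terms of `(1 + r ⬝ σ) / 2`.
  have hsq : blochState rx ry rz = (blochState rx ry rz)ᴴ * blochState rx ry rz +
      ((1 - (rx ^ 2 + ry ^ 2 + rz ^ 2)) / 4) • 1 := by
    rw [isHermitian_blochState]
    ext i j
    fin_cases i <;> fin_cases j <;> simp [blochState] <;> grind [Complex.I_sq]
  rw [hsq]
  exact (posSemidef_conjTranspose_mul_self _).add (PosSemidef.one.smul (by linarith))

lemma sqrt_le_of_coherenceBounded_blochState {q sx sy sz : ℝ} (hq : 0 ≤ q)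
    (hσ : CoherenceBounded q (blochState sx sy sz)) :
    √(sx ^ 2 + sy ^ 2) ≤ q * √(1 - sz ^ 2) := by
  have hdet : ((1 + q) • dephase (blochState sx sy sz) - blochState sx sy sz).det =
      ((q ^ 2 * (1 - sz ^ 2) - (sx ^ 2 + sy ^ 2)) / 4 : ℝ) := by
    have hentries : (1 + q) • dephase (blochState sx sy sz) - blochState sx sy sz =
        !![(q * (1 + sz) / 2 : ℂ), -(sx - sy * Complex.I) / 2;
          -(sx + sy * Complex.I) / 2, q * (1 - sz) / 2] := by
      ext i j
      fin_cases i <;> fin_cases j <;> simp [dephase, blochState] <;> ring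
    rw [hentries, det_fin_two_of]
    push_cast
    linear_combination (sy ^ 2 / 4 : ℂ) * Complex.I_sq
  have hsq : sx ^ 2 + sy ^ 2 ≤ q ^ 2 * (1 - sz ^ 2) := by
    have := hσ.det_nonneg
    rw [hdet, Complex.zero_le_real] at this
    linarith
  calc √(sx ^ 2 + sy ^ 2) ≤ √(q ^ 2 * (1 - sz ^ 2)) := Real.sqrt_le_sqrt hsq
    _ = q * √(1 - sz ^ 2) := by rw [Real.sqrt_mul (sq_nonneg q), Real.sqrt_sq hq]

end BlochState

section Steering

lemma ptraceA_kronecker_one_mul_phiPlus (M : Matrix (Fin 2) (Fin 2) ℂ) :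
    ptraceA ((M ⊗ₖ (1 : Matrix (Fin 2) (Fin 2) ℂ)) * vecMulVec phiPlus (star phiPlus)) =
      (1 / 2 : ℝ) • Mᵀ := by
  have hsqrt : ((√2 : ℝ) : ℂ)⁻¹ * ((√2 : ℝ) : ℂ)⁻¹ = 1 / 2 := by
    rw [← mul_inv, ← Complex.ofReal_mul, Real.mul_self_sqrt zero_le_two]
    simp
  ext i j
  fin_cases i <;> fin_cases j <;>
    simp [ptraceA, phiPlus, mul_apply, Fintype.sum_prod_type, vecMulVec_apply, mul_assoc, hsqrt,
      mul_comm]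

lemma ptraceA_kronecker_one_mul_wernerState (q : ℝ) (M : Matrix (Fin 2) (Fin 2) ℂ) :
    ptraceA ((M ⊗ₖ (1 : Matrix (Fin 2) (Fin 2) ℂ)) * wernerState q) =
      (q / 2) • Mᵀ + ((1 - q) / 4) • M.trace • 1 := by
  rw [wernerState, mul_add, mul_smul_comm, mul_smul_comm, mul_one, ptraceA_add, ptraceA_smul,
    ptraceA_smul, ptraceA_kronecker, ptraceA_kronecker_one_mul_phiPlus, Complex.coe_smul,
    Complex.coe_smul, smul_smul, mul_one_div]

lemma ptraceA_blochState_kronecker_one_mul_wernerState (q rx ry rz : ℝ) :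
    ptraceA ((blochState rx ry rz ⊗ₖ (1 : Matrix (Fin 2) (Fin 2) ℂ)) * wernerState q) =
      (1 / 2 : ℝ) • blochState (q * rx) (-(q * ry)) (q * rz) := by
  rw [ptraceA_kronecker_one_mul_wernerState, trace_blochState]
  ext i j
  fin_cases i <;> fin_cases j <;> simp [blochState] <;> ring

variable {q : ℝ} {M : Matrix (Fin 2) (Fin 2) ℂ}

lemma posSemidef_ptraceA_wernerState (hq₀ : 0 ≤ q) (hq₁ : q ≤ 1) (hM : M.PosSemidef) :
    (ptraceA ((M ⊗ₖ (1 : Matrix (Fin 2) (Fin 2) ℂ)) * wernerState q)).PosSemidef := by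
  rw [ptraceA_kronecker_one_mul_wernerState]
  exact (hM.transpose.smul (by linarith : 0 ≤ q / 2)).add
    ((PosSemidef.one.smul hM.trace_nonneg).smul (by linarith : 0 ≤ (1 - q) / 4))

lemma coherenceBounded_ptraceA_wernerState (hq₀ : 0 ≤ q) (hq₁ : q ≤ 1) (hM : M.PosSemidef) :
    CoherenceBounded q
      (ptraceA ((M ⊗ₖ (1 : Matrix (Fin 2) (Fin 2) ℂ)) * wernerState q)) := by
  have hsplit : (1 + q) • dephase ((q / 2) • Mᵀ + ((1 - q) / 4) • M.trace • 1) -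
      ((q / 2) • Mᵀ + ((1 - q) / 4) • M.trace • 1) =
      (q * (1 + q) / 4) • (((1 : ℝ) + 1) • dephase Mᵀ - Mᵀ) +
        (q * (1 - q) / 4) • (Mᵀ.trace • 1 - Mᵀ) := by
    rw [dephase_add, dephase_smul, dephase_smul, dephase_smul, dephase_one, trace_transpose]
    module
  rw [ptraceA_kronecker_one_mul_wernerState, CoherenceBounded, hsplit]
  have := sub_nonneg.mpr hq₁
  exact (PosSemidef.smul (coherenceBounded_one hM.transpose) (by positivity)).add
    ((posSemidef_trace_smul_one_sub hM.transpose).smul (by positivity))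

lemma eq_zero_of_sum_kraus_conj_eq_smul_blochState (hq₀ : 0 ≤ q) (hq₁ : q ≤ 1)
    (hM : M.PosSemidef) {sx sy sz : ℝ} (hs : q * √(1 - sz ^ 2) < √(sx ^ 2 + sy ^ 2))
    {ι : Type*} [Fintype ι] {K : ι → Matrix (Fin 2) (Fin 2) ℂ}
    (hK : ∀ n, IsIncoherentKraus (K n)) {c : ℝ} (hc : 0 ≤ c)
    (hσ : ∑ n, K n * ptraceA ((M ⊗ₖ (1 : Matrix (Fin 2) (Fin 2) ℂ)) * wernerState q) * (K n)ᴴ =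
      (c : ℂ) • blochState sx sy sz) : c = 0 := by
  have hbound : CoherenceBounded q (c • blochState sx sy sz) := by
    rw [← Complex.coe_smul, ← hσ]
    exact .sum fun n _ => (coherenceBounded_ptraceA_wernerState hq₀ hq₁ hM).conj
      (posSemidef_ptraceA_wernerState hq₀ hq₁ hM) hq₀ (hK n)
  by_contra hc0
  have hnormalized := hbound.smul (inv_nonneg.mpr hc)
  rw [inv_smul_smul₀ hc0] at hnormalized
  exact hs.not_ge (sqrt_le_of_coherenceBounded_blochState hq₀ hnormalized)

end Steering

section Conversion

/-- `Y` is the output on input `X` of a channel with finitely many incoherent Kraus operators.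
Neither matrix is normalised, so that both may carry the probability of a measurement outcome. -/
def IncoherentlyConvertible {d : ℕ} (X Y : Matrix (Fin d) (Fin d) ℂ) : Prop :=
  ∃ (N : ℕ) (K : Fin N → Matrix (Fin d) (Fin d) ℂ),
    (∀ n, IsIncoherentKraus (K n)) ∧ ∑ n, (K n)ᴴ * K n = 1 ∧ ∑ n, K n * X * (K n)ᴴ = Y

lemma IncoherentlyConvertible.smul {d : ℕ} {X Y : Matrix (Fin d) (Fin d) ℂ}
    (h : IncoherentlyConvertible X Y) (c : ℝ) : IncoherentlyConvertible (c • X) (c • Y) := by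
  obtain ⟨N, K, hinc, hone, rfl⟩ := h
  refine ⟨N, K, hinc, hone, ?_⟩
  simp only [mul_smul_comm, smul_mul_assoc, Finset.smul_sum]

lemma isIncoherentKraus_diagonal_submatrix {d : ℕ} (v : Fin d → ℂ) (f : Fin d → Fin d) :
    IsIncoherentKraus ((diagonal v).submatrix id f) := by
  have hrow {i j : Fin d} (h : (diagonal v).submatrix id f i j ≠ 0) : i = f j :=
    not_not.mp (mt (diagonal_apply_ne v) h)
  exact fun j i i' hi hi' => (hrow hi).trans (hrow hi').symm

-- The Kraus operators are `diagonal v` composed with the cyclic shifts; a circulant matrix is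
-- invariant under these.
lemma incoherentlyConvertible_circulant {d : ℕ} [NeZero d] (w : Fin d → ℂ) {v : Fin d → ℂ}
    (hv : ∑ i, star (v i) * v i = 1) :
    IncoherentlyConvertible (circulant w)
      (d • (diagonal v * circulant w * (diagonal v)ᴴ)) := by
  refine ⟨d, fun k => (diagonal v).submatrix id (Equiv.subRight k),
    fun k => isIncoherentKraus_diagonal_submatrix v _, ?_, ?_⟩
  · have hgram (k : Fin d) : ((diagonal v).submatrix id (Equiv.subRight k))ᴴ *
        (diagonal v).submatrix id (Equiv.subRight k) =
        diagonal fun j => star (v (j - k)) * v (j - k) := by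
      rw [conjTranspose_submatrix, submatrix_mul _ _ _ id _ Function.bijective_id |>.symm,
        diagonal_conjTranspose, diagonal_mul_diagonal, submatrix_diagonal_equiv]
      rfl
    ext i j
    simp only [hgram, Matrix.sum_apply, diagonal_apply, one_apply]
    split_ifs
    · rw [← hv]
      exact (Equiv.subLeft i).sum_comp fun l => star (v l) * v l
    · exact Finset.sum_const_zero
  · have hshift (k : Fin d) : circulant w =
        (circulant w).submatrix (Equiv.subRight k) (Equiv.subRight k) := by
      ext i j
      simp
    have hconj (k : Fin d) : (diagonal v).submatrix id (Equiv.subRight k) * circulant w *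
        ((diagonal v).submatrix id (Equiv.subRight k))ᴴ =
        diagonal v * circulant w * (diagonal v)ᴴ := by
      rw [conjTranspose_submatrix, hshift k, submatrix_mul_equiv, submatrix_mul_equiv,
        submatrix_id_id, ← hshift k]
    simp only [hconj, Finset.sum_const, Finset.card_univ, Fintype.card_fin]

lemma exists_norm_eq_one_and_mul_eq {z w : ℂ} (h : ‖z‖ = ‖w‖) : ∃ p : ℂ, ‖p‖ = 1 ∧ w * p = z := by
  rcases eq_or_ne w 0 with rfl | hw
  · exact ⟨1, norm_one, by simpa [eq_comm] using h⟩
  · exact ⟨z / w, by rw [norm_div, h, div_self (norm_ne_zero_iff.mpr hw)], mul_div_cancel₀ z hw⟩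

lemma incoherentlyConvertible_blochState_of_amplitudes {x sx sy sz : ℝ} {a b : ℂ}
    (ha : star a * a = (1 + sz) / 2) (hb : star b * b = (1 - sz) / 2)
    (hab : 2 * x * (star a * b) = sx + sy * Complex.I) :
    IncoherentlyConvertible (blochState x 0 0) (blochState sx sy sz) := by
  rw [Complex.star_def] at ha hb hab
  have hab' : 2 * x * (starRingEnd ℂ b * a) = sx - sy * Complex.I := by
    have hconj := congrArg (starRingEnd ℂ) hab
    simp only [map_mul, map_add, Complex.conj_conj, Complex.conj_ofReal, Complex.conj_ofNat,
      Complex.conj_I] at hconj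
    linear_combination hconj
  have hsource : blochState x 0 0 = circulant ![(1 / 2 : ℂ), x / 2] := by
    ext i j
    fin_cases i <;> fin_cases j <;> simp [blochState]
  have htarget : blochState sx sy sz =
      2 • (diagonal ![a, b] * circulant ![(1 / 2 : ℂ), x / 2] * (diagonal ![a, b])ᴴ) := by
    ext i j
    fin_cases i <;> fin_cases j <;> simp [blochState, diagonal_conjTranspose] <;> grind
  rw [hsource, htarget]
  refine incoherentlyConvertible_circulant _ ?_
  simp only [Fin.sum_univ_two, cons_val_zero, cons_val_one, Complex.star_def]
  linear_combination ha + hb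

lemma incoherentlyConvertible_blochState {x sx sy sz : ℝ} (hz : sz ^ 2 ≤ 1)
    (h : sx ^ 2 + sy ^ 2 = x ^ 2 * (1 - sz ^ 2)) :
    IncoherentlyConvertible (blochState x 0 0) (blochState sx sy sz) := by
  obtain ⟨hz₀, hz₁⟩ := abs_le.mp ((sq_le_one_iff_abs_le_one sz).mp hz)
  have ha : √((1 + sz) / 2) ^ 2 = (1 + sz) / 2 := Real.sq_sqrt (by linarith)
  have hb : √((1 - sz) / 2) ^ 2 = (1 - sz) / 2 := Real.sq_sqrt (by linarith)
  set a := √((1 + sz) / 2)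
  set b := √((1 - sz) / 2)
  obtain ⟨p, hp, hphase⟩ : ∃ p : ℂ, ‖p‖ = 1 ∧
      ((2 * x * a * b : ℝ) : ℂ) * p = sx + sy * Complex.I := by
    refine exists_norm_eq_one_and_mul_eq ?_
    rw [← sq_eq_sq₀ (norm_nonneg _) (norm_nonneg _), Complex.sq_norm, Complex.sq_norm,
      Complex.normSq_add_mul_I, Complex.normSq_ofReal]
    linear_combination h - 4 * x ^ 2 * b ^ 2 * ha - 2 * x ^ 2 * (1 + sz) * hb
  have hpp : starRingEnd ℂ p * p = 1 := by simp [Complex.conj_mul', hp]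
  refine incoherentlyConvertible_blochState_of_amplitudes (a := a) (b := b * p) ?_ ?_ ?_
  · rw [Complex.star_def, Complex.conj_ofReal]
    exact_mod_cast (sq a).symm.trans ha
  · have hb' : (b : ℂ) ^ 2 = (1 - sz) / 2 := by exact_mod_cast hb
    rw [Complex.star_def, map_mul, Complex.conj_ofReal]
    linear_combination hb' + b ^ 2 * hpp
  · rw [← hphase, Complex.star_def, Complex.conj_ofReal]
    push_cast
    ring

lemma incoherentlyConvertible_ptraceA_blochState_wernerState {q u sx sy sz t : ℝ} (hz : sz ^ 2 ≤ 1)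
    (h : sx ^ 2 + sy ^ 2 = (q * u) ^ 2 * (1 - sz ^ 2))
    (ht : ((blochState u 0 0 ⊗ₖ (1 : Matrix (Fin 2) (Fin 2) ℂ)) * wernerState q).trace = t) :
    IncoherentlyConvertible
      (ptraceA ((blochState u 0 0 ⊗ₖ (1 : Matrix (Fin 2) (Fin 2) ℂ)) * wernerState q))
      ((t : ℂ) • blochState sx sy sz) := by
  have hsteer : ptraceA ((blochState u 0 0 ⊗ₖ (1 : Matrix (Fin 2) (Fin 2) ℂ)) * wernerState q) =
      (1 / 2 : ℝ) • blochState (q * u) 0 0 := by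
    simpa using ptraceA_blochState_kronecker_one_mul_wernerState q u 0 0
  have hprob : t = 1 / 2 := by
    rw [← trace_ptraceA, hsteer, trace_smul, trace_blochState, Complex.real_smul, mul_one] at ht
    exact_mod_cast ht.symm
  rw [hsteer, hprob, Complex.coe_smul]
  exact (incoherentlyConvertible_blochState hz h).smul _

lemma exists_sq_le_one_and_mul_eq {r s : ℝ} (hr : 0 ≤ r) (hrs : r ≤ s) :
    ∃ u : ℝ, u ^ 2 ≤ 1 ∧ s * u = r := by
  have hs : 0 ≤ s := hr.trans hrs
  refine ⟨r / s, pow_le_one₀ (div_nonneg hr hs) (div_le_one_of_le₀ hrs hs), ?_⟩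
  exact mul_div_cancel_of_imp' fun h => le_antisymm (hrs.trans_eq h) hr

end Conversion

/-- Assisted incoherent conversion of the Werner state into a coherent qubit target `σ`:
possible with unit probability iff `s ≤ q_w √(1 - sz²)`, impossible otherwise. -/
theorem werner_assisted_conversion
    (qw : ℝ) (hqw0 : 0 ≤ qw) (hqw1 : qw ≤ 1)
    (sx sy sz : ℝ) (hs : sx ^ 2 + sy ^ 2 + sz ^ 2 ≤ 1) (hsc : 0 < sx ^ 2 + sy ^ 2) :
    (Real.sqrt (sx ^ 2 + sy ^ 2) ≤ qw * Real.sqrt (1 - sz ^ 2) →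
      ∃ (m : ℕ) (M : Fin m → Matrix (Fin 2) (Fin 2) ℂ),
        (∀ i, (M i).IsHermitian) ∧ (∀ i, (M i).PosSemidef) ∧ (∑ i, M i = 1) ∧
        ∀ i, ∀ t : ℝ, 0 < t →
          ((M i ⊗ₖ (1 : Matrix (Fin 2) (Fin 2) ℂ)) * wernerState qw).trace = (t : ℂ) →
          ∃ (N : ℕ) (K : Fin N → Matrix (Fin 2) (Fin 2) ℂ),
            (∀ n, IsIncoherentKraus (K n)) ∧ (∑ n, (K n)ᴴ * K n = 1) ∧
            ∑ n, K n * ptraceA ((M i ⊗ₖ (1 : Matrix (Fin 2) (Fin 2) ℂ)) *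
                wernerState qw) * (K n)ᴴ = (t : ℂ) • blochState sx sy sz) ∧
    (qw * Real.sqrt (1 - sz ^ 2) < Real.sqrt (sx ^ 2 + sy ^ 2) →
      ∀ (m : ℕ) (M : Fin m → Matrix (Fin 2) (Fin 2) ℂ),
        (∀ i, (M i).IsHermitian) → (∀ i, (M i).PosSemidef) → (∑ i, M i = 1) →
        ∀ c : Fin m → ℝ, (∀ i, 0 ≤ c i) →
        (∀ i, ∃ (N : ℕ) (K : Fin N → Matrix (Fin 2) (Fin 2) ℂ),
          (∀ n, IsIncoherentKraus (K n)) ∧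
          ((1 : Matrix (Fin 2) (Fin 2) ℂ) - ∑ n, (K n)ᴴ * K n).PosSemidef ∧
          ∑ n, K n * ptraceA ((M i ⊗ₖ (1 : Matrix (Fin 2) (Fin 2) ℂ)) *
              wernerState qw) * (K n)ᴴ = (c i : ℂ) • blochState sx sy sz) →
        ∑ i, c i = 0) := by
  refine ⟨fun h => ?_, fun h m M _ hM _ c hc hK => Finset.sum_eq_zero fun i _ => ?_⟩
  · have hz : sz ^ 2 ≤ 1 := by linarith
    obtain ⟨u, hu, hsu⟩ := exists_sq_le_one_and_mul_eq (Real.sqrt_nonneg _) h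
    have hs_eq : sx ^ 2 + sy ^ 2 = (qw * u) ^ 2 * (1 - sz ^ 2) := by
      rw [← Real.sq_sqrt hsc.le, ← hsu, mul_right_comm, mul_pow, Real.sq_sqrt (sub_nonneg.mpr hz)]
    have hsq : ∀ i, ![u, -u] i ^ 2 = u ^ 2 := by simp [Fin.forall_fin_two]
    have hM : ∀ i, (blochState (![u, -u] i) 0 0).PosSemidef := fun i =>
      posSemidef_blochState (by simpa [hsq] using hu)
    refine ⟨2, fun i => blochState (![u, -u] i) 0 0, fun i => (hM i).1, hM, ?_, fun i t _ ht => ?_⟩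
    · simpa [Fin.sum_univ_two] using blochState_add_blochState_neg u 0 0
    · refine incoherentlyConvertible_ptraceA_blochState_wernerState hz ?_ ht
      rw [hs_eq, mul_pow, mul_pow, hsq]
  · obtain ⟨N, K, hinc, _, hσ⟩ := hK i
    exact eq_zero_of_sum_kraus_conj_eq_smul_blochState hqw0 hqw1 (hM i) h hinc (hc i) hσ
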